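/- Let $\varphi$ be an automorphism of $\mathbb{B}_N$ fixing only $e_1 \in S_N$, and let $\psi$ be continuous on $\overline{\mathbb{B}_N}$, holomorphic on $\mathbb{B}_N$, and bounded away from zero. Define $\psi_{(n)} = \prod_{j=0}^{n-1}\psi\circ\varphi_j$ where $\varphi_j$ is the $j$-th iterate. Then $\lim_{n\to\infty}\|\psi_{(n)}\|_\infty^{1/n} = |\psi(e_1)|$, where $\|\cdot\|_\infty$ denotes the supremum over $\overline{\mathbb{B}_N}$. -/

import Mathlib

open Metric Filter

/-!
By the Schwarz–Pick lemma an automorphism `φ` of the ball preserves the Bergman distance. If the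
orbit of `0` did not leave every compact subset of the ball, a return-time argument of Całka would
make it bounded, and the circumcenter of the full orbit would be a fixed point in the ball. Hence
`‖φₙ(0)‖ → 1`; since `φ` moves the points `φₙ(0)` and `φ₋ₙ(0)` by a constant Bergman distance, their
cluster points are fixed, so both sequences converge to `e₁`. The identity
`|1 - ⟨φₙ(z), φₙ(0)⟩| |1 - ⟨z, φ₋ₙ(0)⟩| = 1 - ‖φₙ(0)‖²` then gives `φₙ(z) → e₁` for every `z` in the
closed ball.

For `c > |ψ(e₁)|`, every `z` therefore admits some `n ≥ 1` with `|ψ₍ₙ₎(z)| < cⁿ`. By compactness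
finitely many such `n` suffice, and the cocycle property of `ψ₍ₙ₎` upgrades this to `|ψ₍ₙ₎| ≤ D cⁿ`
uniformly. Evaluation at `e₁` gives the matching lower bound.
-/

open Set Topology

section Dynamics

lemma rightInvOn_iterate {X : Type*} {s : Set X} {f g : X → X} (hg : MapsTo g s s)
    (h : RightInvOn g f s) (n : ℕ) : RightInvOn g^[n] f^[n] s := by
  induction n with
  | zero => exact fun _ _ => rfl
  | succ n ih =>
    intro x hx
    rw [Function.iterate_succ_apply, Function.iterate_succ_apply', h (hg.iterate n hx), ih hx]

lemma exists_le_le_add_of_frequently {p : ℕ → Prop} {L : ℕ} (h0 : p 0)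
    (hp : ∃ᶠ n in atTop, p n) (hback : ∀ n, L < n → p n → ∃ k, 0 < k ∧ k ≤ L ∧ p (n - k))
    (m : ℕ) : ∃ n ≤ m, m ≤ n + L ∧ p n := by
  classical
  have hex : ∃ n, m ≤ n ∧ p n := frequently_atTop.1 hp m
  obtain ⟨hmn, hpn⟩ := Nat.find_spec hex
  have hmin (k : ℕ) (hk : k < Nat.find hex) (hpk : p k) : k < m :=
    not_le.1 fun hmk => Nat.find_min hex hk ⟨hmk, hpk⟩
  rcases le_or_gt (Nat.find hex) L with hle | hlt
  · exact ⟨0, m.zero_le, by lia, h0⟩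
  · obtain ⟨k, hk, hkL, hpk⟩ := hback _ hlt hpn
    have := hmin _ (by lia) hpk
    exact ⟨_, this.le, by lia, hpk⟩

lemma exists_le_of_forall_exists_eventually {X : Type*} [TopologicalSpace X] {s : Set X}
    (hs : IsCompact s) {p : ℕ → X → Prop} (h : ∀ x ∈ s, ∃ n, ∀ᶠ y in 𝓝[s] x, p n y) :
    ∃ M, ∀ x ∈ s, ∃ n ≤ M, p n x := by
  choose! n hn using h
  obtain ⟨t, -, hcover⟩ := hs.elim_nhdsWithin_subcover (fun x => {y | p (n x) y}) hn
  refine ⟨t.sup n, fun x hx => ?_⟩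
  obtain ⟨y, hy, hxy⟩ := mem_iUnion₂.1 (hcover hx)
  exact ⟨n y, Finset.le_sup hy, hxy⟩

lemma tendsto_of_dist_map_tendsto_zero {X ι : Type*} [MetricSpace X] {s : Set X}
    (hs : IsCompact s) {f : X → X} (hf : ContinuousOn f s) {e : X}
    (honly : ∀ z ∈ s, f z = z → z = e) {l : Filter ι} {u : ι → X} (hu : ∀ i, u i ∈ s)
    (hlim : Tendsto (fun i => dist (f (u i)) (u i)) l (𝓝 0)) : Tendsto u l (𝓝 e) := by
  refine hs.tendsto_nhds_of_unique_mapClusterPt (.of_forall hu) fun y hy hcluster => ?_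
  have hwithin : 𝓝 y ⊓ map u l ≤ 𝓝[s] y :=
    inf_le_inf_left _ (tendsto_principal.2 (.of_forall hu))
  have hdist : MapClusterPt (dist (f y) y) l (fun i => dist (f (u i)) (u i)) :=
    hcluster.tendsto_comp'
      (((hf y hy).tendsto.dist continuousWithinAt_id.tendsto).mono_left hwithin)
  exact honly y hy (dist_eq_zero.1 (eq_of_nhds_neBot (hdist.clusterPt.mono hlim)))

lemma tendsto_zero_of_tendsto_pow_zero {ι : Type*} {l : Filter ι} {a : ι → ℝ} {n : ℕ} (hn : n ≠ 0)
    (h : Tendsto (fun i => a i ^ n) l (𝓝 0)) : Tendsto a l (𝓝 0) := by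
  have hroot := h.abs.rpow_const (p := (n : ℝ)⁻¹) (.inr (by positivity))
  simp only [abs_pow, abs_zero, Real.pow_rpow_inv_natCast (abs_nonneg _) hn,
    Real.zero_rpow (inv_ne_zero (Nat.cast_ne_zero.2 hn))] at hroot
  exact (tendsto_zero_iff_abs_tendsto_zero a).2 hroot

lemma exists_prod_range_lt_pow {a : ℕ → ℝ} {l c : ℝ} (ha : ∀ n, 0 ≤ a n)
    (hlim : Tendsto a atTop (𝓝 l)) (hlc : l < c) :
    ∃ n, 0 < n ∧ ∏ j ∈ Finset.range n, a j < c ^ n := by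
  have hl : 0 ≤ l := ge_of_tendsto' hlim ha
  have hc : 0 < c := hl.trans_lt hlc
  obtain ⟨d, hld, hdc⟩ := exists_between hlc
  have hsummable : Summable fun n => ∏ j ∈ Finset.range n, a j / c := by
    refine summable_of_ratio_norm_eventually_le ((div_lt_one hc).2 hdc) ?_
    filter_upwards [hlim.eventually_lt_const hld] with n hn
    rw [Finset.prod_range_succ, norm_mul, mul_comm, Real.norm_of_nonneg (div_nonneg (ha n) hc.le)]
    gcongr
  obtain ⟨n, hn, hpos⟩ := ((hsummable.tendsto_atTop_zero.eventually_lt_const one_pos).and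
    (eventually_gt_atTop 0)).exists
  rw [Finset.prod_div_distrib, Finset.prod_const, Finset.card_range,
    div_lt_one (by positivity)] at hn
  exact ⟨n, hpos, hn⟩

lemma le_mul_pow_of_submultiplicative {X : Type*} {s : Set X} {f : X → X} (hf : MapsTo f s s)
    {P : ℕ → X → ℝ} (hP0 : ∀ n, ∀ x ∈ s, 0 ≤ P n x)
    (hP : ∀ m n, ∀ x ∈ s, P (m + n) x ≤ P m x * P n (f^[m] x)) {M : ℕ} {c D : ℝ}
    (hbase : ∀ n ≤ M, ∀ x ∈ s, P n x ≤ D * c ^ n)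
    (hdrop : ∀ x ∈ s, ∃ n ≤ M, 0 < n ∧ P n x < c ^ n) (n : ℕ) :
    ∀ x ∈ s, P n x ≤ D * c ^ n := by
  induction n using Nat.strong_induction_on with
  | _ n ih =>
    intro x hx
    rcases le_or_gt n M with hnM | hMn
    · exact hbase n hnM x hx
    · obtain ⟨k, hkM, hk, hdrop⟩ := hdrop x hx
      obtain ⟨m, rfl⟩ := Nat.exists_eq_add_of_le (hkM.trans hMn.le)
      have hx' := hf.iterate k hx
      calc P (k + m) x ≤ P k x * P m (f^[k] x) := hP k m x hx
        _ ≤ c ^ k * (D * c ^ m) :=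
          mul_le_mul hdrop.le (ih m (by lia) _ hx') (hP0 m _ hx') ((hP0 k x hx).trans hdrop.le)
        _ = D * c ^ (k + m) := by ring

lemma exists_prod_iterate_le_mul_pow {X : Type*} [TopologicalSpace X] {s : Set X}
    (hs : IsCompact s) {f : X → X} (hf : ContinuousOn f s) (hfm : MapsTo f s s) {w : X → ℝ}
    (hw : ContinuousOn w s) (hw0 : ∀ x, 0 ≤ w x) {e : X} (he : e ∈ s)
    (hlim : ∀ x ∈ s, Tendsto (fun n => f^[n] x) atTop (𝓝 e)) {c : ℝ} (hc : w e < c) :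
    ∃ D > 0, ∀ n, ∀ x ∈ s, ∏ j ∈ Finset.range n, w (f^[j] x) ≤ D * c ^ n := by
  have hc0 : 0 < c := (hw0 e).trans_lt hc
  have hPc (n : ℕ) : ContinuousOn (fun x => ∏ j ∈ Finset.range n, w (f^[j] x)) s :=
    continuousOn_finsetProd _ fun j _ => hw.comp (hf.iterate hfm j) (hfm.iterate j)
  have hdrop : ∀ x ∈ s, ∃ n, 0 < n ∧ ∏ j ∈ Finset.range n, w (f^[j] x) < c ^ n := fun x hx =>
    exists_prod_range_lt_pow (fun n => hw0 _) ((hw e he).tendsto.comp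
      (tendsto_nhdsWithin_iff.2 ⟨hlim x hx, .of_forall fun n => hfm.iterate n hx⟩)) hc
  obtain ⟨M, hM⟩ := exists_le_of_forall_exists_eventually hs
    (p := fun n x => 0 < n ∧ ∏ j ∈ Finset.range n, w (f^[j] x) < c ^ n) fun x hx =>
      (hdrop x hx).imp fun n hn =>
        ((hPc n x hx).eventually_lt_const hn.2).mono fun _ hy => ⟨hn.1, hy⟩
  obtain ⟨B, hB⟩ := hs.exists_bound_of_continuousOn hw
  have hBc : 1 ≤ max B c / c := (one_le_div hc0).2 (le_max_right B c)
  refine ⟨(max B c / c) ^ M, by positivity, le_mul_pow_of_submultiplicative hfm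
    (P := fun n x => ∏ j ∈ Finset.range n, w (f^[j] x))
    (fun n x _ => Finset.prod_nonneg fun j _ => hw0 _) (fun m n x _ => ?_) (fun n hn x hx => ?_)
    hM⟩
  · simp only [Finset.prod_range_add, ← Function.iterate_add_apply, add_comm, le_refl]
  · calc ∏ j ∈ Finset.range n, w (f^[j] x) ≤ ∏ _j ∈ Finset.range n, max B c :=
          Finset.prod_le_prod (fun j _ => hw0 _) fun j _ =>
            (le_abs_self _).trans ((hB _ (hfm.iterate j hx)).trans (le_max_left B c))
      _ = (max B c / c) ^ n * c ^ n := by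
          rw [Finset.prod_const, Finset.card_range, ← mul_pow, div_mul_cancel₀ _ hc0.ne']
      _ ≤ (max B c / c) ^ M * c ^ n := by gcongr

lemma tendsto_rpow_one_div_of_pow_le_of_le_mul_pow {a : ℕ → ℝ} {l : ℝ} (hl : 0 ≤ l)
    (hlower : ∀ n, l ^ n ≤ a n) (hupper : ∀ c > l, ∃ D > 0, ∀ n, a n ≤ D * c ^ n) :
    Tendsto (fun n : ℕ => a n ^ (1 / (n : ℝ))) atTop (𝓝 l) := by
  have hroot {x : ℝ} (hx : 0 ≤ x) {n : ℕ} (hn : 0 < n) : (x ^ n) ^ (1 / (n : ℝ)) = x := by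
    rw [one_div, Real.pow_rpow_inv_natCast hx hn.ne']
  refine tendsto_order.2 ⟨fun b hb => ?_, fun b hb => ?_⟩
  · filter_upwards [eventually_gt_atTop 0] with n hn
    calc b < (l ^ n) ^ (1 / (n : ℝ)) := by rwa [hroot hl hn]
      _ ≤ a n ^ (1 / (n : ℝ)) := Real.rpow_le_rpow (by positivity) (hlower n) (by positivity)
  · obtain ⟨c, hlc, hcb⟩ := exists_between hb
    have hc : 0 ≤ c := hl.trans hlc.le
    obtain ⟨D, hD, hupper⟩ := hupper c hlc
    have hlim : Tendsto (fun n : ℕ => D ^ (1 / (n : ℝ)) * c) atTop (𝓝 c) := by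
      simpa using ((tendsto_const_nhds (x := D)).rpow tendsto_one_div_atTop_nhds_zero_nat
        (.inl hD.ne')).mul_const c
    filter_upwards [eventually_gt_atTop 0, hlim.eventually_lt_const hcb] with n hn hlt
    calc a n ^ (1 / (n : ℝ)) ≤ (D * c ^ n) ^ (1 / (n : ℝ)) :=
          Real.rpow_le_rpow ((pow_nonneg hl n).trans (hlower n)) (hupper n) (by positivity)
      _ = D ^ (1 / (n : ℝ)) * c := by rw [Real.mul_rpow hD.le (by positivity), hroot hc hn]
      _ < b := hlt

lemma tendsto_sSup_prod_iterate_rpow_one_div {X : Type*} [TopologicalSpace X] {s : Set X}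
    (hs : IsCompact s) {f : X → X} (hf : ContinuousOn f s) (hfm : MapsTo f s s) {w : X → ℝ}
    (hw : ContinuousOn w s) (hw0 : ∀ x, 0 ≤ w x) {e : X} (he : e ∈ s) (hfix : f e = e)
    (hlim : ∀ x ∈ s, Tendsto (fun n => f^[n] x) atTop (𝓝 e)) :
    Tendsto (fun n : ℕ =>
      sSup ((fun x => ∏ j ∈ Finset.range n, w (f^[j] x)) '' s) ^ (1 / (n : ℝ)))
      atTop (𝓝 (w e)) := by
  have hbound (c : ℝ) (hc : w e < c) := exists_prod_iterate_le_mul_pow hs hf hfm hw hw0 he hlim hc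
  refine tendsto_rpow_one_div_of_pow_le_of_le_mul_pow (hw0 e) (fun n => ?_) fun c hc => ?_
  · obtain ⟨D, -, hD⟩ := hbound (w e + 1) (lt_add_one _)
    refine le_csSup ⟨D * (w e + 1) ^ n, forall_mem_image.2 (hD n)⟩ ⟨e, he, ?_⟩
    simp [Function.iterate_fixed hfix]
  · obtain ⟨D, hD0, hD⟩ := hbound c hc
    exact ⟨D, hD0, fun n => csSup_le ⟨_, e, he, rfl⟩ (forall_mem_image.2 (hD n))⟩

end Dynamics

section BallGeometry

lemma one_sub_norm_sq_pos {E : Type*} [SeminormedAddCommGroup E] {z : E}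
    (hz : z ∈ ball (0 : E) 1) : 0 < 1 - ‖z‖ ^ 2 := by
  have : ‖z‖ < 1 := mem_ball_zero_iff.1 hz
  nlinarith [norm_nonneg z]

lemma mem_ball_of_one_sub_norm_sq_pos {E : Type*} [SeminormedAddCommGroup E] {z : E}
    (hz : 0 < 1 - ‖z‖ ^ 2) : z ∈ ball (0 : E) 1 := by
  rw [mem_ball_zero_iff]
  nlinarith [norm_nonneg z]

variable {E F : Type*} [NormedAddCommGroup E] [InnerProductSpace ℂ E]
  [NormedAddCommGroup F] [InnerProductSpace ℂ F]

lemma one_sub_norm_le_norm_one_sub_inner {z w : E} (hz : ‖z‖ ≤ 1) :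
    1 - ‖w‖ ≤ ‖1 - inner ℂ w z‖ :=
  calc 1 - ‖w‖ ≤ 1 - ‖w‖ * ‖z‖ := by nlinarith [norm_nonneg w]
    _ ≤ ‖(1 : ℂ)‖ - ‖inner ℂ w z‖ := by
      rw [norm_one]
      gcongr
      exact norm_inner_le_norm w z
    _ ≤ ‖1 - inner ℂ w z‖ := norm_sub_norm_le _ _

lemma norm_one_sub_inner_pos {z w : E} (hz : ‖z‖ ≤ 1) (hw : w ∈ ball (0 : E) 1) :
    0 < ‖1 - inner ℂ w z‖ :=
  (sub_pos.2 (mem_ball_zero_iff.1 hw)).trans_le (one_sub_norm_le_norm_one_sub_inner hz)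

lemma one_sub_inner_ne_zero {z w : E} (hz : z ∈ ball (0 : E) 1) (hw : w ∈ ball (0 : E) 1) :
    1 - inner ℂ w z ≠ 0 :=
  norm_pos_iff.1 (norm_one_sub_inner_pos (mem_ball_zero_iff.1 hz).le hw)

lemma norm_one_sub_inner_comm (z w : E) : ‖1 - inner ℂ w z‖ = ‖1 - inner ℂ z w‖ := by
  rw [← inner_conj_symm, ← Complex.norm_conj]
  simp

lemma norm_sub_sq_le_two_mul_norm_one_sub_inner {u v : E} (hu : ‖u‖ ≤ 1) (hv : ‖v‖ ≤ 1) :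
    ‖u - v‖ ^ 2 ≤ 2 * ‖1 - inner ℂ v u‖ := by
  have hre : 1 - (inner ℂ v u).re ≤ ‖1 - inner ℂ v u‖ := by
    simpa using Complex.re_le_norm (1 - inner ℂ v u)
  have hsq : ‖u - v‖ ^ 2 = ‖v‖ ^ 2 - 2 * (inner ℂ v u).re + ‖u‖ ^ 2 := by
    rw [norm_sub_rev, @norm_sub_sq ℂ E, RCLike.re_eq_complex_re]
  nlinarith [norm_nonneg u, norm_nonneg v]

/-- The square of the hyperbolic cosine of the (suitably normalized) Bergman distance on the unit
ball. It stands in for that automorphism-invariant distance, and is meaningful only for points of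
the open ball. -/
noncomputable def coshSqDist (z w : E) : ℝ :=
  ‖1 - inner ℂ w z‖ ^ 2 / ((1 - ‖z‖ ^ 2) * (1 - ‖w‖ ^ 2))

lemma coshSqDist_comm (z w : E) : coshSqDist z w = coshSqDist w z := by
  rw [coshSqDist, coshSqDist, norm_one_sub_inner_comm, mul_comm (1 - ‖z‖ ^ 2)]

lemma coshSqDist_zero_right (z : E) : coshSqDist z 0 = (1 - ‖z‖ ^ 2)⁻¹ := by
  simp [coshSqDist]

lemma coshSqDist_pos {z w : E} (hz : z ∈ ball (0 : E) 1) (hw : w ∈ ball (0 : E) 1) :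
    0 < coshSqDist z w :=
  div_pos (pow_pos (norm_one_sub_inner_pos (mem_ball_zero_iff.1 hz).le hw) 2)
    (mul_pos (one_sub_norm_sq_pos hz) (one_sub_norm_sq_pos hw))

lemma coshSqDist_self {z : E} (hz : z ∈ ball (0 : E) 1) : coshSqDist z z = 1 := by
  have hpos := one_sub_norm_sq_pos hz
  have hnorm : ‖1 - inner ℂ z z‖ = 1 - ‖z‖ ^ 2 := by
    rw [inner_self_eq_norm_sq_to_K]
    rw [RCLike.ofReal_eq_complex_ofReal]
    norm_cast
    exact Real.norm_of_nonneg hpos.le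
  rw [coshSqDist, hnorm, ← sq, div_self (by positivity)]

lemma coshSqDist_le_iff {z w : E} (hz : z ∈ ball (0 : E) 1) (hw : w ∈ ball (0 : E) 1) {c : ℝ} :
    coshSqDist z w ≤ c ↔ ‖1 - inner ℂ w z‖ ^ 2 ≤ c * ((1 - ‖z‖ ^ 2) * (1 - ‖w‖ ^ 2)) :=
  div_le_iff₀ (mul_pos (one_sub_norm_sq_pos hz) (one_sub_norm_sq_pos hw))

lemma continuousAt_coshSqDist_left {z w : E} (hz : z ∈ ball (0 : E) 1) (hw : w ∈ ball (0 : E) 1) :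
    ContinuousAt (fun x => coshSqDist x w) z := by
  have hden : (1 - ‖z‖ ^ 2) * (1 - ‖w‖ ^ 2) ≠ 0 :=
    (mul_pos (one_sub_norm_sq_pos hz) (one_sub_norm_sq_pos hw)).ne'
  exact ContinuousAt.div (by fun_prop) (by fun_prop) hden

lemma coshSqDist_zero_le_div {u w : E} (hu : u ∈ ball (0 : E) 1) (hw : w ∈ ball (0 : E) 1) :
    coshSqDist u 0 ≤ coshSqDist u w / (1 - ‖w‖) ^ 2 := by
  have hu' := one_sub_norm_sq_pos hu
  have hw' := one_sub_norm_sq_pos hw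
  have hw1 : 0 < 1 - ‖w‖ := sub_pos.2 (mem_ball_zero_iff.1 hw)
  have hinner := one_sub_norm_le_norm_one_sub_inner (w := w) (mem_ball_zero_iff.1 hu).le
  rw [coshSqDist_zero_right, coshSqDist, le_div_iff₀ (by positivity), le_div_iff₀ (by positivity)]
  calc (1 - ‖u‖ ^ 2)⁻¹ * (1 - ‖w‖) ^ 2 * ((1 - ‖u‖ ^ 2) * (1 - ‖w‖ ^ 2))
      = (1 - ‖w‖) ^ 2 * (1 - ‖w‖ ^ 2) := by field_simp
    _ ≤ (1 - ‖w‖) ^ 2 * 1 := by gcongr; nlinarith [norm_nonneg w]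
    _ ≤ ‖1 - inner ℂ w u‖ ^ 2 := by rw [mul_one]; gcongr

lemma isCompact_setOf_coshSqDist_zero_le [ProperSpace E] (R : ℝ) :
    IsCompact {z ∈ ball (0 : E) 1 | coshSqDist z 0 ≤ R} := by
  have heq : {z ∈ ball (0 : E) 1 | coshSqDist z 0 ≤ R} =
      closedBall 0 1 ∩ {z | 1 ≤ R * (1 - ‖z‖ ^ 2)} := by
    ext z
    constructor
    · rintro ⟨hz, hR⟩
      exact ⟨ball_subset_closedBall hz, by simpa [coshSqDist_le_iff hz] using hR⟩
    · rintro ⟨hz, hR : 1 ≤ R * (1 - ‖z‖ ^ 2)⟩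
      have hnonneg : 0 ≤ 1 - ‖z‖ ^ 2 := by
        nlinarith [norm_nonneg z, mem_closedBall_zero_iff.1 hz]
      have hz' : z ∈ ball (0 : E) 1 := mem_ball_of_one_sub_norm_sq_pos <|
        hnonneg.lt_of_ne' fun h => by norm_num [h] at hR
      exact ⟨hz', by simpa [coshSqDist_le_iff hz'] using hR⟩
  rw [heq]
  exact (isCompact_closedBall 0 1).inter_right (isClosed_le (by fun_prop) (by fun_prop))

/-- The holomorphic involution of the unit ball exchanging `0` and `a`. With `P` the orthogonal
projection onto `ℂ a`, `Q = 1 - P` and `s = √(1 - ‖a‖²)`, it is the map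
`z ↦ (a - P z - s Q z) / (1 - ⟪a, z⟫)`, written here without dividing by `‖a‖²`. -/
noncomputable def ballInvolution (a z : E) : E :=
  (1 - inner ℂ a z)⁻¹ • ((1 - inner ℂ a z / (1 + (√(1 - ‖a‖ ^ 2) : ℂ))) • a -
    (√(1 - ‖a‖ ^ 2) : ℂ) • z)

lemma ballInvolution_zero (a : E) : ballInvolution a 0 = a := by
  simp [ballInvolution]

lemma norm_sq_sub_norm_sq_ballInvolution_numerator (a z : E) {s : ℝ} (hs : 0 ≤ s)
    (hsa : s ^ 2 = 1 - ‖a‖ ^ 2) :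
    ‖1 - inner ℂ a z‖ ^ 2 - ‖(1 - inner ℂ a z / (1 + (s : ℂ))) • a - (s : ℂ) • z‖ ^ 2 =
      s ^ 2 * (1 - ‖z‖ ^ 2) := by
  set c := inner ℂ a z with hc
  have hs1 : 1 + s ≠ 0 := by positivity
  have hcoeff : 1 - c / (1 + (s : ℂ)) = ⟨1 - c.re / (1 + s), -c.im / (1 + s)⟩ := by
    rw [← Complex.ofReal_one, ← Complex.ofReal_add]
    apply Complex.ext <;>
      simp only [Complex.sub_re, Complex.sub_im, Complex.div_ofReal_re, Complex.div_ofReal_im,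
        Complex.ofReal_re, Complex.ofReal_im, zero_sub, neg_div]
  have hasq : ‖a‖ ^ 2 = 1 - s ^ 2 := by linarith
  rw [hcoeff, @norm_sub_sq ℂ E, inner_smul_left, inner_smul_right, ← hc, norm_smul, norm_smul,
    mul_pow, mul_pow, hasq]
  simp only [← Complex.normSq_eq_norm_sq, Complex.normSq_apply, Complex.sub_re, Complex.sub_im,
    Complex.one_re, Complex.one_im, Complex.mul_re, Complex.mul_im, Complex.conj_re,
    Complex.conj_im, Complex.ofReal_re, Complex.ofReal_im, RCLike.re_eq_complex_re]
  field_simp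
  ring

lemma one_sub_norm_ballInvolution_sq {a z : E} (ha : a ∈ ball (0 : E) 1)
    (hz : z ∈ ball (0 : E) 1) : 1 - ‖ballInvolution a z‖ ^ 2 = (coshSqDist z a)⁻¹ := by
  have hinner : ‖1 - inner ℂ a z‖ ≠ 0 := norm_ne_zero_iff.2 (one_sub_inner_ne_zero hz ha)
  have hs : √(1 - ‖a‖ ^ 2) ^ 2 = 1 - ‖a‖ ^ 2 := Real.sq_sqrt (one_sub_norm_sq_pos ha).le
  have hnum := norm_sq_sub_norm_sq_ballInvolution_numerator a z (Real.sqrt_nonneg _) hs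
  rw [hs] at hnum
  rw [ballInvolution, coshSqDist, norm_smul, mul_pow, norm_inv, inv_div]
  field_simp
  rw [hnum]

lemma ballInvolution_mem_ball {a z : E} (ha : a ∈ ball (0 : E) 1) (hz : z ∈ ball (0 : E) 1) :
    ballInvolution a z ∈ ball (0 : E) 1 := by
  apply mem_ball_of_one_sub_norm_sq_pos
  rw [one_sub_norm_ballInvolution_sq ha hz]
  exact inv_pos.2 (coshSqDist_pos hz ha)

lemma ballInvolution_ballInvolution {a z : E} (ha : a ∈ ball (0 : E) 1)
    (hz : z ∈ ball (0 : E) 1) : ballInvolution a (ballInvolution a z) = z := by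
  have hc0 := one_sub_inner_ne_zero hz ha
  have hpos := one_sub_norm_sq_pos ha
  have hs : 0 < √(1 - ‖a‖ ^ 2) := Real.sqrt_pos.2 hpos
  have hsq : ‖a‖ ^ 2 = 1 - √(1 - ‖a‖ ^ 2) ^ 2 := by rw [Real.sq_sqrt hpos.le]; ring
  set s := √(1 - ‖a‖ ^ 2) with hsdef
  set c := inner ℂ a z with hc
  have hs0 : (s : ℂ) ≠ 0 := mod_cast hs.ne'
  have hs1 : 1 + (s : ℂ) ≠ 0 := by
    norm_cast
    positivity
  have haa : inner ℂ a a = 1 - (s : ℂ) ^ 2 := by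
    rw [inner_self_eq_norm_sq_to_K, RCLike.ofReal_eq_complex_ofReal]
    exact_mod_cast hsq
  have hinner : inner ℂ a (ballInvolution a z) = (1 - (s : ℂ) ^ 2 - c) / (1 - c) := by
    rw [ballInvolution, ← hsdef, inner_smul_right, inner_sub_right, inner_smul_right,
      inner_smul_right, haa, ← hc]
    field_simp
    ring
  have hone_sub : 1 - inner ℂ a (ballInvolution a z) = s ^ 2 / (1 - c) := by
    rw [hinner]
    field_simp
    ring
  rw [ballInvolution, ← hsdef, hone_sub, hinner, ballInvolution, ← hsdef, ← hc]
  match_scalars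
  · field_simp
    ring
  · field_simp

lemma differentiableOn_ballInvolution {a : E} (ha : a ∈ ball (0 : E) 1) :
    DifferentiableOn ℂ (ballInvolution a) (ball 0 1) := by
  have hinner : Differentiable ℂ fun z : E => inner ℂ a z := (innerSL ℂ a).differentiable
  have hcoeff : Differentiable ℂ fun z : E => 1 - inner ℂ a z / (1 + (√(1 - ‖a‖ ^ 2) : ℂ)) := by
    simpa only [div_eq_mul_inv] using (hinner.mul_const _).const_sub 1
  exact ((hinner.const_sub 1).differentiableOn.inv fun z hz => one_sub_inner_ne_zero hz ha).smul
    ((hcoeff.smul_const a).sub (differentiable_id.const_smul _)).differentiableOn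

theorem coshSqDist_map_le {f : E → F} (hf : DifferentiableOn ℂ f (ball 0 1))
    (hfm : MapsTo f (ball 0 1) (ball 0 1)) {z w : E} (hz : z ∈ ball (0 : E) 1)
    (hw : w ∈ ball (0 : E) 1) : coshSqDist (f z) (f w) ≤ coshSqDist z w := by
  have hTw : MapsTo (ballInvolution w) (ball 0 1) (ball 0 1) :=
    fun _ hx => ballInvolution_mem_ball hw hx
  have hTfw : MapsTo (ballInvolution (f w)) (ball 0 1) (ball 0 1) :=
    fun _ hx => ballInvolution_mem_ball (hfm hw) hx
  have hzero : ballInvolution (f w) (f (ballInvolution w 0)) = 0 := by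
    have := ballInvolution_ballInvolution (hfm hw) (mem_ball_self one_pos)
    rwa [ballInvolution_zero] at this ⊢
  have hschwarz : ‖ballInvolution (f w) (f z)‖ ≤ ‖ballInvolution w z‖ := by
    have := Complex.norm_le_norm_of_mapsTo_ball (f := ballInvolution (f w) ∘ f ∘ ballInvolution w)
      ((differentiableOn_ballInvolution (hfm hw)).comp
        (hf.comp (differentiableOn_ballInvolution hw) hTw) (hfm.comp hTw))
      (fun x hx => ball_subset_closedBall (hTfw (hfm (hTw hx)))) hzero
      (mem_ball_zero_iff.1 (hTw hz))
    simpa only [Function.comp_apply, ballInvolution_ballInvolution hw hz] using this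
  rw [← inv_le_inv₀ (coshSqDist_pos hz hw) (coshSqDist_pos (hfm hz) (hfm hw)),
    ← one_sub_norm_ballInvolution_sq hw hz, ← one_sub_norm_ballInvolution_sq (hfm hw) (hfm hz)]
  gcongr

end BallGeometry

section BallIsometry

variable {E : Type*} [NormedAddCommGroup E] [InnerProductSpace ℂ E] {φ φinv : E → E}

/-- A self-map of the open unit ball preserving the Bergman distance, expressed through
`coshSqDist`. Nothing is required outside the open ball. -/
structure IsBallIsometry (φ : E → E) : Prop where
  mapsTo : MapsTo φ (ball 0 1) (ball 0 1)
  coshSqDist_map : ∀ ⦃z⦄, z ∈ ball (0 : E) 1 → ∀ ⦃w⦄, w ∈ ball (0 : E) 1 →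
    coshSqDist (φ z) (φ w) = coshSqDist z w

lemma isBallIsometry_of_leftInvOn (hφ : DifferentiableOn ℂ φ (ball 0 1))
    (hφinv : DifferentiableOn ℂ φinv (ball 0 1)) (hφm : MapsTo φ (ball 0 1) (ball 0 1))
    (hφinvm : MapsTo φinv (ball 0 1) (ball 0 1)) (hleft : LeftInvOn φinv φ (ball 0 1)) :
    IsBallIsometry φ where
  mapsTo := hφm
  coshSqDist_map z hz w hw := by
    refine (coshSqDist_map_le hφ hφm hz hw).antisymm ?_
    have := coshSqDist_map_le hφinv hφinvm (hφm hz) (hφm hw)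
    rwa [hleft hz, hleft hw] at this

lemma isBallIsometry_ballInvolution {a : E} (ha : a ∈ ball (0 : E) 1) :
    IsBallIsometry (ballInvolution a) :=
  isBallIsometry_of_leftInvOn (differentiableOn_ballInvolution ha)
    (differentiableOn_ballInvolution ha) (fun _ => ballInvolution_mem_ball ha)
    (fun _ => ballInvolution_mem_ball ha) fun _ => ballInvolution_ballInvolution ha

namespace IsBallIsometry

lemma iterate (hφ : IsBallIsometry φ) (n : ℕ) : IsBallIsometry φ^[n] := by
  refine ⟨hφ.mapsTo.iterate n, ?_⟩
  induction n with
  | zero => exact fun _ _ _ _ => rfl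
  | succ n ih =>
    intro z hz w hw
    rw [Function.iterate_succ_apply, Function.iterate_succ_apply, ih (hφ.mapsTo hz) (hφ.mapsTo hw),
      hφ.coshSqDist_map hz hw]

lemma iterate_zero_mem_ball (hφ : IsBallIsometry φ) (n : ℕ) : φ^[n] 0 ∈ ball (0 : E) 1 :=
  hφ.mapsTo.iterate n (mem_ball_self one_pos)

lemma norm_sq_eq_of_map_eq_zero (hφ : IsBallIsometry φ) {a : E} (ha : a ∈ ball (0 : E) 1)
    (hφa : φ a = 0) : ‖a‖ ^ 2 = ‖φ 0‖ ^ 2 := by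
  have h := hφ.coshSqDist_map ha (mem_ball_self one_pos)
  rw [hφa, coshSqDist_comm, coshSqDist_zero_right, coshSqDist_zero_right, inv_inj] at h
  linarith

end IsBallIsometry

end BallIsometry

section FixedPoint

variable {E : Type*} [NormedAddCommGroup E] [InnerProductSpace ℂ E] {φ φinv : E → E}

lemma norm_one_add_ofReal {σ : ℝ} (hσ : 0 ≤ σ) : ‖(1 + σ : ℂ)‖ = 1 + σ := by
  norm_cast
  exact Real.norm_of_nonneg (by positivity)

lemma one_sub_norm_inv_smul_sq {v : E} {σ : ℝ} (hσ : 0 < σ) (hσv : σ ^ 2 = 1 - ‖v‖ ^ 2) :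
    1 - ‖(1 + σ : ℂ)⁻¹ • v‖ ^ 2 = 2 * σ / (1 + σ) := by
  rw [norm_smul, norm_inv, norm_one_add_ofReal hσ.le, mul_pow,
    show ‖v‖ ^ 2 = 1 - σ ^ 2 by linarith]
  field_simp
  ring

lemma norm_one_sub_inner_inv_smul_le (s v : E) {σ : ℝ} (hσ : 0 < σ) :
    ‖1 - inner ℂ s ((1 + σ : ℂ)⁻¹ • v)‖ ≤ (σ + ‖1 - inner ℂ s v‖) / (1 + σ) := by
  have hσ0 : (1 + σ : ℂ) ≠ 0 := norm_pos_iff.1 (by rw [norm_one_add_ofReal hσ.le]; positivity)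
  have heq : 1 - inner ℂ s ((1 + σ : ℂ)⁻¹ • v) = (σ + (1 - inner ℂ s v)) / (1 + σ) := by
    rw [inner_smul_right]
    field_simp
    ring
  rw [heq, norm_div, norm_one_add_ofReal hσ.le]
  gcongr
  simpa [abs_of_pos hσ] using norm_add_le (σ : ℂ) (1 - inner ℂ s v)

-- The Bergman midpoint of `0` and `v` is `v / (1 + σ)`, where `σ = √(1 - ‖v‖²)`.
lemma exists_midpoint_zero {v : E} (hv : v ∈ ball (0 : E) 1) (hv0 : v ≠ 0) :
    ∃ θ < 1, ∃ m ∈ ball (0 : E) 1, ∀ s ∈ ball (0 : E) 1, ∀ M : ℝ,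
      coshSqDist 0 s ≤ M → coshSqDist v s ≤ M → coshSqDist m s ≤ θ * M := by
  have hpos := one_sub_norm_sq_pos hv
  obtain ⟨σ, hσ, hσv⟩ : ∃ σ > 0, σ ^ 2 = 1 - ‖v‖ ^ 2 :=
    ⟨√(1 - ‖v‖ ^ 2), Real.sqrt_pos.2 hpos, Real.sq_sqrt hpos.le⟩
  have hσ1 : σ < 1 := by nlinarith [norm_pos_iff.2 hv0]
  have hmnorm := one_sub_norm_inv_smul_sq hσ hσv
  have hm : (1 + σ : ℂ)⁻¹ • v ∈ ball (0 : E) 1 :=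
    mem_ball_of_one_sub_norm_sq_pos (by rw [hmnorm]; positivity)
  refine ⟨2 * σ / (1 + σ), (div_lt_one (by positivity)).2 (by linarith), _, hm,
    fun s hs M hM0 hMv => ?_⟩
  rw [coshSqDist_le_iff (mem_ball_self one_pos) hs] at hM0
  rw [coshSqDist_le_iff hv hs, ← hσv] at hMv
  simp only [inner_zero_right, sub_zero, norm_one, norm_zero] at hM0
  rw [coshSqDist_le_iff hm hs, hmnorm]
  calc ‖1 - inner ℂ s ((1 + σ : ℂ)⁻¹ • v)‖ ^ 2
      ≤ ((σ + ‖1 - inner ℂ s v‖) / (1 + σ)) ^ 2 := by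
        gcongr
        exact norm_one_sub_inner_inv_smul_le s v hσ
    _ ≤ (2 * (σ ^ 2 + ‖1 - inner ℂ s v‖ ^ 2)) / (1 + σ) ^ 2 := by
      rw [div_pow]
      gcongr
      exact add_sq_le
    _ ≤ (2 * (σ ^ 2 * (M * (1 - ‖s‖ ^ 2)) + M * (σ ^ 2 * (1 - ‖s‖ ^ 2)))) / (1 + σ) ^ 2 := by
      gcongr
      nlinarith [sq_nonneg σ]
    _ = 2 * σ / (1 + σ) * M * (2 * σ / (1 + σ) * (1 - ‖s‖ ^ 2)) := by
      field_simp
      ring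

lemma exists_midpoint {z w : E} (hz : z ∈ ball (0 : E) 1) (hw : w ∈ ball (0 : E) 1)
    (hne : z ≠ w) :
    ∃ θ < 1, ∃ m ∈ ball (0 : E) 1, ∀ s ∈ ball (0 : E) 1, ∀ M : ℝ,
      coshSqDist z s ≤ M → coshSqDist w s ≤ M → coshSqDist m s ≤ θ * M := by
  have hT := isBallIsometry_ballInvolution hw
  have hTT {x : E} (hx : x ∈ ball (0 : E) 1) := ballInvolution_ballInvolution hw hx
  have hTz : ballInvolution w z ≠ 0 := fun h =>
    hne (by rw [← hTT hz, h, ballInvolution_zero])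
  have hTw : ballInvolution w w = 0 := by
    simpa only [ballInvolution_zero] using hTT (mem_ball_self one_pos)
  obtain ⟨θ, hθ, m, hm, hmid⟩ := exists_midpoint_zero (hT.mapsTo hz) hTz
  refine ⟨θ, hθ, ballInvolution w m, hT.mapsTo hm, fun s hs M hMz hMw => ?_⟩
  rw [← hT.coshSqDist_map (hT.mapsTo hm) hs, hTT hm]
  apply hmid _ (hT.mapsTo hs)
  · rwa [← hTw, hT.coshSqDist_map hw hs]
  · rwa [hT.coshSqDist_map hz hs]

lemma exists_circumcenter [ProperSpace E] {S : Set E} (hS : S ⊆ ball 0 1) (hne : S.Nonempty)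
    {R : ℝ} (hR : ∀ s ∈ S, coshSqDist 0 s ≤ R) :
    ∃ z ∈ ball (0 : E) 1, ∃ M, (∀ s ∈ S, coshSqDist z s ≤ M) ∧
      ∀ w ∈ ball (0 : E) 1, ∀ c, (∀ s ∈ S, coshSqDist w s ≤ c) → M ≤ c := by
  obtain ⟨s₀, hs₀⟩ := hne
  have h0 : (0 : E) ∈ ball (0 : E) 1 := mem_ball_self one_pos
  set C : Set (E × ℝ) := closedBall 0 1 ×ˢ Icc 0 R ∩ {p | ∀ s ∈ S,
    ‖1 - inner ℂ s p.1‖ ^ 2 ≤ p.2 * ((1 - ‖p.1‖ ^ 2) * (1 - ‖s‖ ^ 2))}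
  have hCcompact : IsCompact C := by
    refine ((isCompact_closedBall 0 1).prod isCompact_Icc).inter_right ?_
    simp only [ofPred_forall]
    exact isClosed_biInter fun s _ => isClosed_le (by fun_prop) (by fun_prop)
  have hCmem {w : E} (hw : w ∈ ball (0 : E) 1) {c : ℝ} (hcR : c ≤ R)
      (hc : ∀ s ∈ S, coshSqDist w s ≤ c) : (w, c) ∈ C :=
    ⟨⟨ball_subset_closedBall hw, (coshSqDist_pos hw (hS hs₀)).le.trans (hc s₀ hs₀), hcR⟩,
      fun s hs => (coshSqDist_le_iff hw (hS hs)).1 (hc s hs)⟩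
  obtain ⟨⟨z, M⟩, ⟨⟨hz, hM0, hMR⟩, hzM⟩, hmin⟩ :=
    hCcompact.exists_isMinOn ⟨_, hCmem h0 le_rfl hR⟩ continuous_snd.continuousOn
  have hzball : z ∈ ball (0 : E) 1 := by
    refine mem_ball_of_one_sub_norm_sq_pos ?_
    have hpos := pow_pos (norm_one_sub_inner_pos (mem_closedBall_zero_iff.1 hz) (hS hs₀)) 2
    exact pos_of_mul_pos_left (pos_of_mul_pos_right (hpos.trans_le (hzM s₀ hs₀)) hM0)
      (one_sub_norm_sq_pos (hS hs₀)).le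
  refine ⟨z, hzball, M, fun s hs => (coshSqDist_le_iff hzball (hS hs)).2 (hzM s hs),
    fun w hw c hc => ?_⟩
  rcases le_total c R with hcR | hRc
  · exact hmin (hCmem hw hcR hc)
  · exact hMR.trans hRc

lemma IsBallIsometry.exists_fixedPoint_of_subset_image [ProperSpace E] (hφ : IsBallIsometry φ)
    {S : Set E} (hS : S ⊆ ball 0 1) (hne : S.Nonempty) (hSφ : S ⊆ φ '' S) {R : ℝ}
    (hR : ∀ s ∈ S, coshSqDist 0 s ≤ R) : ∃ z ∈ ball (0 : E) 1, φ z = z := by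
  obtain ⟨z, hz, M, hzM, hmin⟩ := exists_circumcenter hS hne hR
  refine ⟨z, hz, by_contra fun hφz => ?_⟩
  have hφzM : ∀ s ∈ S, coshSqDist (φ z) s ≤ M := fun s hs => by
    obtain ⟨t, ht, rfl⟩ := hSφ hs
    rw [hφ.coshSqDist_map hz (hS ht)]
    exact hzM t ht
  obtain ⟨θ, hθ, m, hm, hmid⟩ := exists_midpoint (hφ.mapsTo hz) hz hφz
  have hle : M ≤ θ * M := hmin m hm _ fun s hs => hmid s (hS hs) M (hφzM s hs) (hzM s hs)
  have hMpos : 0 < M := by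
    obtain ⟨s, hs⟩ := hne
    exact (coshSqDist_pos hz (hS hs)).trans_le (hzM s hs)
  nlinarith

lemma IsBallIsometry.exists_fixedPoint_of_bounded_orbit [ProperSpace E] (hφ : IsBallIsometry φ)
    (hφinvm : MapsTo φinv (ball 0 1) (ball 0 1)) (hright : RightInvOn φinv φ (ball 0 1)) {R : ℝ}
    (hR : ∀ n, coshSqDist (φ^[n] 0) 0 ≤ R) : ∃ z ∈ ball (0 : E) 1, φ z = z := by
  have h0 : (0 : E) ∈ ball (0 : E) 1 := mem_ball_self one_pos
  have hback (n : ℕ) : φinv^[n] 0 ∈ ball (0 : E) 1 := hφinvm.iterate n h0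
  refine hφ.exists_fixedPoint_of_subset_image (R := R)
    (S := range (fun n => φ^[n] 0) ∪ range (fun n => φinv^[n] 0)) ?_ ⟨0, .inl ⟨0, rfl⟩⟩ ?_ ?_
  · exact union_subset (range_subset_iff.2 hφ.iterate_zero_mem_ball) (range_subset_iff.2 hback)
  · rintro _ (⟨_ | n, rfl⟩ | ⟨n, rfl⟩)
    · exact ⟨φinv 0, .inr ⟨1, rfl⟩, hright h0⟩
    · exact ⟨φ^[n] 0, .inl ⟨n, rfl⟩, (Function.iterate_succ_apply' φ n 0).symm⟩
    · refine ⟨φinv^[n + 1] 0, .inr ⟨n + 1, rfl⟩, ?_⟩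
      rw [Function.iterate_succ_apply', hright (hback n)]
  · rintro _ (⟨n, rfl⟩ | ⟨n, rfl⟩)
    · rw [coshSqDist_comm]
      exact hR n
    · rw [← (hφ.iterate n).coshSqDist_map h0 (hback n),
        rightInvOn_iterate hφinvm hright n h0]
      exact hR n

end FixedPoint

section Escape

variable {E : Type*} [NormedAddCommGroup E] [InnerProductSpace ℂ E] [ProperSpace E]
  {φ φinv : E → E}

namespace IsBallIsometry

lemma exists_return_time (hφ : IsBallIsometry φ) {R : ℝ} (hR : 1 < R) :
    ∃ L, ∀ n, L < n → coshSqDist (φ^[n] 0) 0 ≤ R →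
      ∃ k, 0 < k ∧ k ≤ L ∧ coshSqDist (φ^[n - k] 0) 0 ≤ R := by
  have h0 : (0 : E) ∈ ball (0 : E) 1 := mem_ball_self one_pos
  have hball := hφ.iterate_zero_mem_ball
  obtain ⟨M, hM⟩ := exists_le_of_forall_exists_eventually
    ((isCompact_setOf_coshSqDist_zero_le (E := E) R).inter_right
      (isClosed_closure (s := range fun k => φ^[k + 1] 0)))
    (p := fun k y => coshSqDist y (φ^[k + 1] 0) < R) (by
      rintro x ⟨⟨hx, -⟩, hclosure⟩
      have hnear : ∀ᶠ y in 𝓝 x, coshSqDist y x < R :=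
        (continuousAt_coshSqDist_left hx hx).eventually_lt_const ((coshSqDist_self hx).trans_lt hR)
      obtain ⟨_, hk, k, rfl⟩ := mem_closure_iff_nhds.1 hclosure _ hnear
      have hk : coshSqDist x (φ^[k + 1] 0) < R := by rwa [coshSqDist_comm]
      exact ⟨k, ((continuousAt_coshSqDist_left hx (hball _)).eventually_lt_const hk).filter_mono
        nhdsWithin_le_nhds⟩)
  refine ⟨M + 1, fun n hn hnR => ?_⟩
  obtain ⟨m, rfl⟩ := Nat.exists_eq_add_of_lt hn
  obtain ⟨k, hkM, hk⟩ := hM (φ^[M + 1 + m + 1] 0)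
    ⟨⟨hball _, hnR⟩, subset_closure ⟨M + 1 + m, rfl⟩⟩
  refine ⟨k + 1, k.succ_pos, by lia, ?_⟩
  rw [← (hφ.iterate (k + 1)).coshSqDist_map (hball _) h0, ← Function.iterate_add_apply,
    Nat.add_sub_cancel' (by lia)]
  exact hk.le

-- An argument of Całka: a returning orbit of an isometry returns at bounded intervals.
lemma exists_coshSqDist_iterate_zero_le_of_frequently (hφ : IsBallIsometry φ) {R : ℝ}
    (hR : 1 < R) (hfreq : ∃ᶠ n in atTop, coshSqDist (φ^[n] 0) 0 ≤ R) :
    ∃ B, ∀ n, coshSqDist (φ^[n] 0) 0 ≤ B := by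
  have h0 : (0 : E) ∈ ball (0 : E) 1 := mem_ball_self one_pos
  have hball := hφ.iterate_zero_mem_ball
  have hstart : coshSqDist (φ^[0] (0 : E)) 0 ≤ R := (coshSqDist_self h0).trans_le hR.le
  obtain ⟨L, hL⟩ := hφ.exists_return_time hR
  refine ⟨∑ r ∈ Finset.range (L + 1), R / (1 - ‖φ^[r] 0‖) ^ 2, fun m => ?_⟩
  obtain ⟨n, hnm, hmn, hn⟩ := exists_le_le_add_of_frequently hstart hfreq hL m
  obtain ⟨r, rfl⟩ := Nat.exists_eq_add_of_le' hnm
  calc coshSqDist (φ^[r + n] 0) 0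
      ≤ coshSqDist (φ^[r + n] 0) (φ^[r] 0) / (1 - ‖φ^[r] 0‖) ^ 2 :=
        coshSqDist_zero_le_div (hball _) (hball r)
    _ = coshSqDist (φ^[n] 0) 0 / (1 - ‖φ^[r] 0‖) ^ 2 := by
        rw [Function.iterate_add_apply, (hφ.iterate r).coshSqDist_map (hball n) h0]
    _ ≤ R / (1 - ‖φ^[r] 0‖) ^ 2 := by gcongr
    _ ≤ ∑ r ∈ Finset.range (L + 1), R / (1 - ‖φ^[r] 0‖) ^ 2 :=
        Finset.single_le_sum (f := fun r => R / (1 - ‖φ^[r] 0‖) ^ 2)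
          (fun _ _ => by positivity) (Finset.mem_range.2 (by lia))

lemma tendsto_one_sub_norm_sq_iterate_zero (hφ : IsBallIsometry φ)
    (hφinvm : MapsTo φinv (ball 0 1) (ball 0 1)) (hright : RightInvOn φinv φ (ball 0 1))
    (hnofix : ∀ z ∈ ball (0 : E) 1, φ z ≠ z) :
    Tendsto (fun n => 1 - ‖φ^[n] 0‖ ^ 2) atTop (𝓝 0) := by
  have hpos (n : ℕ) := one_sub_norm_sq_pos (hφ.iterate_zero_mem_ball n)
  refine tendsto_order.2 ⟨fun b hb => .of_forall fun n => hb.trans (hpos n), fun ε hε => ?_⟩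
  by_contra hfreq
  rw [not_eventually] at hfreq
  have hreturn : ∃ᶠ n in atTop, coshSqDist (φ^[n] 0) 0 ≤ max 2 ε⁻¹ := hfreq.mono fun n hn => by
    rw [coshSqDist_zero_right]
    exact (inv_anti₀ hε (not_lt.1 hn)).trans (le_max_right _ _)
  obtain ⟨B, hB⟩ := hφ.exists_coshSqDist_iterate_zero_le_of_frequently
    (one_lt_two.trans_le (le_max_left _ _)) hreturn
  obtain ⟨z, hz, hφz⟩ := hφ.exists_fixedPoint_of_bounded_orbit hφinvm hright hB
  exact hnofix z hz hφz

end IsBallIsometry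

end Escape

section BoundaryFixedPoint

variable {E : Type*} [NormedAddCommGroup E] [InnerProductSpace ℂ E] {φ φinv : E → E} {e : E}

lemma norm_sub_pow_four_le {z w : E} (hz : z ∈ ball (0 : E) 1) (hw : w ∈ ball (0 : E) 1) :
    ‖z - w‖ ^ 4 ≤ 4 * coshSqDist z w * (1 - ‖w‖ ^ 2) := by
  have hw' := one_sub_norm_sq_pos hw
  have hz' : 1 - ‖z‖ ^ 2 ≤ 1 := by nlinarith [sq_nonneg ‖z‖]
  have hk := coshSqDist_pos hz hw
  calc ‖z - w‖ ^ 4 = (‖z - w‖ ^ 2) ^ 2 := by ring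
    _ ≤ (2 * ‖1 - inner ℂ w z‖) ^ 2 := by
      gcongr
      exact norm_sub_sq_le_two_mul_norm_one_sub_inner (mem_ball_zero_iff.1 hz).le
        (mem_ball_zero_iff.1 hw).le
    _ = 4 * ‖1 - inner ℂ w z‖ ^ 2 := by ring
    _ ≤ 4 * (coshSqDist z w * (1 * (1 - ‖w‖ ^ 2))) := by
      grw [(coshSqDist_le_iff hz hw).1 le_rfl, hz']
    _ = 4 * coshSqDist z w * (1 - ‖w‖ ^ 2) := by ring

lemma tendsto_of_coshSqDist_map_le [ProperSpace E] (hφc : ContinuousOn φ (closedBall 0 1))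
    (hφm : MapsTo φ (ball 0 1) (ball 0 1)) (honly : ∀ z ∈ closedBall (0 : E) 1, φ z = z → z = e)
    {ι : Type*} {l : Filter ι} {u : ι → E} (hu : ∀ i, u i ∈ ball (0 : E) 1) {k : ℝ}
    (hk : ∀ i, coshSqDist (φ (u i)) (u i) ≤ k)
    (hlim : Tendsto (fun i => 1 - ‖u i‖ ^ 2) l (𝓝 0)) : Tendsto u l (𝓝 e) := by
  refine tendsto_of_dist_map_tendsto_zero (isCompact_closedBall 0 1) hφc honly
    (fun i => ball_subset_closedBall (hu i)) ?_
  have hpow : Tendsto (fun i => dist (φ (u i)) (u i) ^ 4) l (𝓝 0) := by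
    refine squeeze_zero (fun i => by positivity) (fun i => ?_)
      (by simpa using hlim.const_mul (4 * k))
    rw [dist_eq_norm]
    have := one_sub_norm_sq_pos (hu i)
    grw [norm_sub_pow_four_le (hφm (hu i)) (hu i), hk i]
  exact tendsto_zero_of_tendsto_pow_zero four_ne_zero hpow

namespace IsBallIsometry

-- Divide the invariance of `coshSqDist z 0` by that of `coshSqDist z a`, then pass to the boundary.
lemma norm_one_sub_inner_mul_eq (hφ : IsBallIsometry φ) (hφc : ContinuousOn φ (closedBall 0 1))
    {a : E} (ha : a ∈ ball (0 : E) 1) (hφa : φ a = 0) {z : E} (hz : z ∈ closedBall (0 : E) 1) :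
    ‖1 - inner ℂ (φ 0) (φ z)‖ * ‖1 - inner ℂ a z‖ = 1 - ‖φ 0‖ ^ 2 := by
  have h0 : (0 : E) ∈ ball (0 : E) 1 := mem_ball_self one_pos
  have hφ0 := one_sub_norm_sq_pos (hφ.mapsTo h0)
  have hball : EqOn (fun z => ‖1 - inner ℂ (φ 0) (φ z)‖ * ‖1 - inner ℂ a z‖)
      (fun _ => 1 - ‖φ 0‖ ^ 2) (ball 0 1) := by
    intro z hz
    have hz' := one_sub_norm_sq_pos hz
    have hφz := one_sub_norm_sq_pos (hφ.mapsTo hz)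
    have hzero := hφ.coshSqDist_map hz h0
    have hpre := hφ.coshSqDist_map hz ha
    rw [coshSqDist_zero_right, coshSqDist, div_eq_iff (by positivity)] at hzero
    rw [hφa, coshSqDist_zero_right, coshSqDist, hφ.norm_sq_eq_of_map_eq_zero ha hφa,
      eq_div_iff (by positivity)] at hpre
    refine (sq_eq_sq₀ (by positivity) hφ0.le).1 ?_
    rw [mul_pow, hzero, ← hpre]
    field_simp
  exact hball.of_subset_closure (t := closedBall 0 1) (by fun_prop) (by fun_prop)
    ball_subset_closedBall (closure_ball _ one_ne_zero).ge hz

lemma norm_map_sub_map_zero_sq_le (hφ : IsBallIsometry φ) (hφc : ContinuousOn φ (closedBall 0 1))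
    (hφcm : MapsTo φ (closedBall 0 1) (closedBall 0 1)) {a : E} (ha : a ∈ ball (0 : E) 1)
    (hφa : φ a = 0) {z : E} (hz : z ∈ closedBall (0 : E) 1) :
    ‖φ z - φ 0‖ ^ 2 ≤ 2 * ((1 - ‖φ 0‖ ^ 2) / ‖1 - inner ℂ a z‖) := by
  rw [← hφ.norm_one_sub_inner_mul_eq hφc ha hφa hz,
    mul_div_cancel_right₀ _ (norm_one_sub_inner_pos (mem_closedBall_zero_iff.1 hz) ha).ne']
  exact norm_sub_sq_le_two_mul_norm_one_sub_inner (mem_closedBall_zero_iff.1 (hφcm hz))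
    (mem_ball_zero_iff.1 (hφ.mapsTo (mem_ball_self one_pos))).le

lemma tendsto_iterate_zero [ProperSpace E] (hφ : IsBallIsometry φ)
    (hφc : ContinuousOn φ (closedBall 0 1))
    (honly : ∀ z ∈ closedBall (0 : E) 1, φ z = z → z = e)
    (hlim : Tendsto (fun n => 1 - ‖φ^[n] 0‖ ^ 2) atTop (𝓝 0)) :
    Tendsto (fun n => φ^[n] 0) atTop (𝓝 e) := by
  have h0 : (0 : E) ∈ ball (0 : E) 1 := mem_ball_self one_pos
  refine tendsto_of_coshSqDist_map_le hφc hφ.mapsTo honly hφ.iterate_zero_mem_ball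
    (k := coshSqDist (φ 0) 0) (fun n => ?_) hlim
  rw [← Function.iterate_succ_apply' φ, Function.iterate_succ_apply,
    (hφ.iterate n).coshSqDist_map (hφ.mapsTo h0) h0]

lemma tendsto_iterate_inv_zero [ProperSpace E] (hφ : IsBallIsometry φ)
    (hφc : ContinuousOn φ (closedBall 0 1))
    (hφinvm : MapsTo φinv (ball 0 1) (ball 0 1)) (hright : RightInvOn φinv φ (ball 0 1))
    (honly : ∀ z ∈ closedBall (0 : E) 1, φ z = z → z = e)
    (hlim : Tendsto (fun n => 1 - ‖φ^[n] 0‖ ^ 2) atTop (𝓝 0)) :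
    Tendsto (fun n => φinv^[n] 0) atTop (𝓝 e) := by
  have h0 : (0 : E) ∈ ball (0 : E) 1 := mem_ball_self one_pos
  have hback (n : ℕ) : φinv^[n] 0 ∈ ball (0 : E) 1 := hφinvm.iterate n h0
  have hzero (n : ℕ) : φ^[n] (φinv^[n] 0) = 0 := rightInvOn_iterate hφinvm hright n h0
  refine tendsto_of_coshSqDist_map_le hφc hφ.mapsTo honly hback
    (k := coshSqDist (φ 0) 0) (fun n => ?_) ?_
  · rw [← (hφ.iterate n).coshSqDist_map (hφ.mapsTo (hback n)) (hback n),
      ← Function.iterate_succ_apply, Function.iterate_succ_apply', hzero]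
  · simpa only [(hφ.iterate _).norm_sq_eq_of_map_eq_zero (hback _) (hzero _)] using hlim

lemma tendsto_iterate [ProperSpace E] (hφ : IsBallIsometry φ)
    (hφc : ContinuousOn φ (closedBall 0 1))
    (hφcm : MapsTo φ (closedBall 0 1) (closedBall 0 1))
    (hφinvm : MapsTo φinv (ball 0 1) (ball 0 1)) (hright : RightInvOn φinv φ (ball 0 1))
    (he : ‖e‖ = 1) (hfix : φ e = e) (honly : ∀ z ∈ closedBall (0 : E) 1, φ z = z → z = e)
    {z : E} (hz : z ∈ closedBall (0 : E) 1) : Tendsto (fun n => φ^[n] z) atTop (𝓝 e) := by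
  rcases eq_or_ne z e with rfl | hze
  · simp only [Function.iterate_fixed hfix, tendsto_const_nhds]
  have hnofix : ∀ z ∈ ball (0 : E) 1, φ z ≠ z := fun z hz hφz => by
    rw [honly z (ball_subset_closedBall hz) hφz, mem_ball_zero_iff, he] at hz
    exact lt_irrefl _ hz
  have hlim := hφ.tendsto_one_sub_norm_sq_iterate_zero hφinvm hright hnofix
  have hforward := hφ.tendsto_iterate_zero hφc honly hlim
  have hbackward := hφ.tendsto_iterate_inv_zero hφc hφinvm hright honly hlim
  have hden : ‖1 - inner ℂ e z‖ ≠ 0 := fun h => by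
    have := norm_sub_sq_le_two_mul_norm_one_sub_inner (mem_closedBall_zero_iff.1 hz) he.le
    rw [h, mul_zero, sq_nonpos_iff, norm_eq_zero, sub_eq_zero] at this
    exact hze this
  have hbound : Tendsto (fun n => 2 * ((1 - ‖φ^[n] 0‖ ^ 2) / ‖1 - inner ℂ (φinv^[n] 0) z‖))
      atTop (𝓝 0) := by
    simpa using (hlim.div (tendsto_const_nhds.sub
      (hbackward.inner tendsto_const_nhds)).norm hden).const_mul 2
  have hsq : Tendsto (fun n => ‖φ^[n] z - φ^[n] 0‖ ^ 2) atTop (𝓝 0) :=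
    squeeze_zero (fun n => by positivity) (fun n =>
      (hφ.iterate n).norm_map_sub_map_zero_sq_le (hφc.iterate hφcm n) (hφcm.iterate n)
        (hφinvm.iterate n (mem_ball_self one_pos))
        (rightInvOn_iterate hφinvm hright n (mem_ball_self one_pos)) hz) hbound
  have hdiff : Tendsto (fun n => φ^[n] z - φ^[n] 0) atTop (𝓝 0) :=
    tendsto_zero_iff_norm_tendsto_zero.2 (tendsto_zero_of_tendsto_pow_zero two_ne_zero hsq)
  simpa using hdiff.add hforward

end IsBallIsometry

end BoundaryFixedPoint

theorem stmt15_general {E 𝕜 : Type*} [NormedAddCommGroup E] [InnerProductSpace ℂ E]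
    [ProperSpace E] [NormedField 𝕜] {φ φinv : E → E} {e : E} (he : ‖e‖ = 1)
    (hφc : ContinuousOn φ (closedBall 0 1)) (hφ : DifferentiableOn ℂ φ (ball 0 1))
    (hφinv : DifferentiableOn ℂ φinv (ball 0 1)) (hφm : MapsTo φ (ball 0 1) (ball 0 1))
    (hφinvm : MapsTo φinv (ball 0 1) (ball 0 1))
    (hinv : InvOn φinv φ (ball 0 1) (ball 0 1)) (hfix : φ e = e)
    (honly : ∀ z ∈ closedBall (0 : E) 1, φ z = z → z = e) {ψ : E → 𝕜}
    (hψc : ContinuousOn ψ (closedBall 0 1)) :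
    Tendsto (fun n : ℕ =>
      sSup ((fun z => ‖∏ j ∈ Finset.range n, ψ (φ^[j] z)‖) '' closedBall (0 : E) 1) ^ (1 / (n : ℝ)))
      atTop (𝓝 ‖ψ e‖) := by
  have hφcm : MapsTo φ (closedBall 0 1) (closedBall 0 1) := by
    simpa only [closure_ball _ one_ne_zero] using hφm.closure_of_continuousOn
      (by rwa [closure_ball _ one_ne_zero])
  have hisom : IsBallIsometry φ := isBallIsometry_of_leftInvOn hφ hφinv hφm hφinvm hinv.1
  simp only [norm_prod]
  exact tendsto_sSup_prod_iterate_rpow_one_div (isCompact_closedBall 0 1) hφc hφcm hψc.norm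
    (fun _ => norm_nonneg _) (mem_closedBall_zero_iff.2 he.le) hfix fun z hz =>
      hisom.tendsto_iterate hφc hφcm hφinvm hinv.2 he hfix honly hz

/-- Let `φ` be an automorphism of `𝔹_N` fixing only `e₁` (in the closed ball), and let `ψ` be
continuous on the closed ball, holomorphic on the ball and bounded away from zero. With
`ψ_{(n)} = ∏_{j=0}^{n-1} ψ ∘ φ_j`, one has `lim_n ‖ψ_{(n)}‖_∞^{1/n} = |ψ(e₁)|`. -/
theorem stmt15 {N : ℕ}
    (φ φinv : EuclideanSpace ℂ (Fin (N + 1)) → EuclideanSpace ℂ (Fin (N + 1)))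
    (e₁ : EuclideanSpace ℂ (Fin (N + 1))) (he₁ : e₁ = EuclideanSpace.single 0 1)
    (hφc : ContinuousOn φ (closedBall 0 1))
    (hφ : DifferentiableOn ℂ φ (ball 0 1))
    (hφinv : DifferentiableOn ℂ φinv (ball 0 1))
    (hφm : Set.MapsTo φ (ball 0 1) (ball 0 1))
    (hφinvm : Set.MapsTo φinv (ball 0 1) (ball 0 1))
    (hhomeo : Set.BijOn φ (closedBall 0 1) (closedBall 0 1))
    (hleft : ∀ z ∈ ball (0 : EuclideanSpace ℂ (Fin (N + 1))) 1, φinv (φ z) = z)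
    (hright : ∀ z ∈ ball (0 : EuclideanSpace ℂ (Fin (N + 1))) 1, φ (φinv z) = z)
    (hfix : φ e₁ = e₁)
    (honly : ∀ z ∈ closedBall (0 : EuclideanSpace ℂ (Fin (N + 1))) 1, φ z = z → z = e₁)
    (ψ : EuclideanSpace ℂ (Fin (N + 1)) → ℂ)
    (hψc : ContinuousOn ψ (closedBall 0 1))
    (hψ : DifferentiableOn ℂ ψ (ball 0 1))
    (hψ0 : ∃ ε > (0 : ℝ), ∀ z ∈ ball (0 : EuclideanSpace ℂ (Fin (N + 1))) 1, ε ≤ ‖ψ z‖) :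
    Tendsto
      (fun n : ℕ =>
        (sSup ((fun z => ‖∏ j ∈ Finset.range n, ψ (φ^[j] z)‖) ''
          closedBall (0 : EuclideanSpace ℂ (Fin (N + 1))) 1)) ^ (1 / (n : ℝ)))
      atTop (nhds ‖ψ e₁‖) :=
  stmt15_general (by simp [he₁]) hφc hφ hφinv hφm hφinvm ⟨hleft, hright⟩ hfix honly hψc
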